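/- arXiv:math/0609603 — 4 statements merged into one kernel-verified Lean document; each statement's English description precedes it below -/
import Mathlib

section
/- For every real number a ≥ 0, ∫₀^∞ ρ² e^{−aρ²} (∫_ρ^∞ e^{−η²} dη) dρ = (1/2) ∫₁^∞ (ζ² + a)^{−2} dζ, and both integrals are finite. -/
/-!
For `ρ > 0` the substitution `η = ρ ζ` turns `∫_{cρ}^∞ e^{-η²} dη` into `ρ ∫_c^∞ e^{-ρ²ζ²} dζ`.
The left-hand side thus becomes the double integral of `ρ ^ (2n + 1) e^{-(ζ² + a)ρ²}` over
`ρ > 0`, `ζ ≥ c`. This kernel is nonnegative and its `ρ`-integral is `n! / 2 · (ζ² + a)^{-(n+1)}`,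
which is integrable on `[c, ∞)`. Hence Fubini's theorem applies and gives all three claims at once.
-/

open MeasureTheory Real

theorem integrableOn_pow_mul_exp_neg_mul_sq (n : ℕ) {b : ℝ} (hb : 0 < b) :
    IntegrableOn (fun x : ℝ => x ^ n * exp (-b * x ^ 2)) (Set.Ioi 0) := by
  have hn : (-1 : ℝ) < n := neg_one_lt_zero.trans_le n.cast_nonneg
  simpa only [rpow_natCast] using integrableOn_rpow_mul_exp_neg_mul_sq hb hn

theorem integral_pow_two_mul_add_one_mul_exp_neg_mul_sq (n : ℕ) {b : ℝ} (hb : 0 < b) :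
    ∫ x in Set.Ioi (0 : ℝ), x ^ (2 * n + 1) * exp (-b * x ^ 2) =
      n.factorial / 2 * (1 / b ^ (n + 1)) := by
  have hq : (-1 : ℝ) < (2 * n + 1 : ℕ) := neg_one_lt_zero.trans_le (Nat.cast_nonneg _)
  have hexp : (((2 * n + 1 : ℕ) : ℝ) + 1) / (2 : ℕ) = (n + 1 : ℕ) := by push_cast; ring
  have hmellin := integral_rpow_mul_exp_neg_mul_rpow (p := (2 : ℕ)) (by norm_num) hq hb
  simp only [rpow_natCast] at hmellin
  rw [hmellin, neg_div, hexp, rpow_neg hb.le, rpow_natCast, Nat.cast_succ n,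
    Gamma_nat_eq_factorial]
  push_cast
  ring

theorem sq_add_pos_of_le {a c x : ℝ} (hc : 0 ≤ c) (ha : 0 < c ^ 2 + a) (hx : c ≤ x) :
    0 < x ^ 2 + a :=
  ha.trans_le (by gcongr)

theorem exists_pos_mul_one_add_sq_le_sq_add {a c : ℝ} (hc : 0 ≤ c) (ha : 0 < c ^ 2 + a) :
    ∃ m > 0, ∀ x, c ≤ x → m * (1 + x ^ 2) ≤ x ^ 2 + a := by
  refine ⟨min 1 ((c ^ 2 + a) / (1 + c ^ 2)), by positivity, fun x hx => ?_⟩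
  set m := min 1 ((c ^ 2 + a) / (1 + c ^ 2))
  have hm_one : m ≤ 1 := min_le_left _ _
  have hm_c : m * (1 + c ^ 2) ≤ c ^ 2 + a := (le_div_iff₀ (by positivity)).1 (min_le_right _ _)
  have hsq : c ^ 2 ≤ x ^ 2 := by gcongr
  calc m * (1 + x ^ 2) = m * (1 + c ^ 2) + m * (x ^ 2 - c ^ 2) := by ring
    _ ≤ (c ^ 2 + a) + 1 * (x ^ 2 - c ^ 2) := by gcongr
    _ = x ^ 2 + a := by ring

theorem integrableOn_one_div_sq_add_pow_succ (n : ℕ) {a c : ℝ} (hc : 0 ≤ c)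
    (ha : 0 < c ^ 2 + a) :
    IntegrableOn (fun x : ℝ => 1 / (x ^ 2 + a) ^ (n + 1)) (Set.Ici c) := by
  obtain ⟨m, hm, hle⟩ := exists_pos_mul_one_add_sq_le_sq_add hc ha
  refine Integrable.mono' (integrable_inv_one_add_sq.const_mul (m ^ (n + 1))⁻¹).integrableOn
    (Measurable.aestronglyMeasurable (by fun_prop)) ?_
  filter_upwards [ae_restrict_mem measurableSet_Ici] with x (hx : c ≤ x)
  have hpos : 0 < x ^ 2 + a := sq_add_pos_of_le hc ha hx
  have hone : 1 ≤ 1 + x ^ 2 := le_add_of_nonneg_right (sq_nonneg x)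
  calc ‖1 / (x ^ 2 + a) ^ (n + 1)‖ = ((x ^ 2 + a) ^ (n + 1))⁻¹ := by
        rw [norm_of_nonneg (by positivity), one_div]
    _ ≤ ((m * (1 + x ^ 2)) ^ (n + 1))⁻¹ := by gcongr; exact hle x hx
    _ = (m ^ (n + 1))⁻¹ * ((1 + x ^ 2) ^ (n + 1))⁻¹ := by rw [mul_pow, mul_inv]
    _ ≤ (m ^ (n + 1))⁻¹ * (1 + x ^ 2)⁻¹ := by gcongr; exact le_self_pow₀ hone n.succ_ne_zero

theorem integrable_uncurry_pow_mul_exp_neg_sq_add_mul_sq (n : ℕ) {a c : ℝ} (hc : 0 ≤ c)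
    (ha : 0 < c ^ 2 + a) :
    Integrable
      (Function.uncurry fun ρ ζ : ℝ => ρ ^ (2 * n + 1) * exp (-(ζ ^ 2 + a) * ρ ^ 2))
      ((volume.restrict (Set.Ioi 0)).prod (volume.restrict (Set.Ici c))) := by
  refine (integrable_prod_iff' (Measurable.aestronglyMeasurable (by fun_prop))).2 ⟨?_, ?_⟩
  · filter_upwards [ae_restrict_mem measurableSet_Ici] with ζ hζ
    exact integrableOn_pow_mul_exp_neg_mul_sq _ (sq_add_pos_of_le hc ha hζ)
  · refine ((integrableOn_one_div_sq_add_pow_succ n hc ha).const_mul (n.factorial / 2)).congr ?_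
    filter_upwards [ae_restrict_mem measurableSet_Ici] with ζ hζ
    rw [← integral_pow_two_mul_add_one_mul_exp_neg_mul_sq n (sq_add_pos_of_le hc ha hζ)]
    refine setIntegral_congr_fun measurableSet_Ioi fun ρ (hρ : 0 < ρ) => ?_
    exact (norm_of_nonneg (by positivity)).symm

theorem integral_Ioi_mul_eq_mul_integral_Ici {E : Type*} [NormedAddCommGroup E] [NormedSpace ℝ E]
    (f : ℝ → E) (c : ℝ) {ρ : ℝ} (hρ : 0 < ρ) :
    ∫ η in Set.Ioi (c * ρ), f η = ρ • ∫ ζ in Set.Ici c, f (ρ * ζ) := by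
  rw [integral_Ici_eq_integral_Ioi, integral_comp_mul_left_Ioi f c hρ, smul_inv_smul₀ hρ.ne',
    mul_comm]

theorem pow_mul_exp_mul_integral_Ioi_exp_neg_sq (n : ℕ) (a c : ℝ) {ρ : ℝ} (hρ : 0 < ρ) :
    ρ ^ n * exp (-a * ρ ^ 2) * ∫ η in Set.Ioi (c * ρ), exp (-η ^ 2) =
      ∫ ζ in Set.Ici c, ρ ^ (n + 1) * exp (-(ζ ^ 2 + a) * ρ ^ 2) := by
  rw [integral_Ioi_mul_eq_mul_integral_Ici _ c hρ, smul_eq_mul, ← mul_assoc,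
    ← integral_const_mul]
  congr 1 with ζ
  have hexp : exp (-(ζ ^ 2 + a) * ρ ^ 2) = exp (-a * ρ ^ 2) * exp (-(ρ * ζ) ^ 2) := by
    rw [← exp_add]
    ring_nf
  rw [hexp]
  ring

theorem integral_sq_exp_mul_erfc_eq_general (n : ℕ) {a c : ℝ} (hc : 0 ≤ c)
    (ha : 0 < c ^ 2 + a) :
    (∫ ρ in Set.Ioi (0 : ℝ),
        ρ ^ (2 * n) * exp (-a * ρ ^ 2) * ∫ η in Set.Ioi (c * ρ), exp (-η ^ 2))
      = (n.factorial / 2) * ∫ ζ in Set.Ici c, 1 / (ζ ^ 2 + a) ^ (n + 1) ∧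
    IntegrableOn
      (fun ρ => ρ ^ (2 * n) * exp (-a * ρ ^ 2) * ∫ η in Set.Ioi (c * ρ), exp (-η ^ 2))
      (Set.Ioi (0 : ℝ)) ∧
    IntegrableOn (fun ζ => 1 / (ζ ^ 2 + a) ^ (n + 1)) (Set.Ici c) := by
  have hkernel := integrable_uncurry_pow_mul_exp_neg_sq_add_mul_sq n hc ha
  have hinner : Set.EqOn
      (fun ρ => ρ ^ (2 * n) * exp (-a * ρ ^ 2) * ∫ η in Set.Ioi (c * ρ), exp (-η ^ 2))
      (fun ρ => ∫ ζ in Set.Ici c, ρ ^ (2 * n + 1) * exp (-(ζ ^ 2 + a) * ρ ^ 2)) (Set.Ioi 0) :=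
    fun _ hρ => pow_mul_exp_mul_integral_Ioi_exp_neg_sq (2 * n) a c hρ
  refine ⟨?_, (integrableOn_congr_fun hinner measurableSet_Ioi).2 hkernel.integral_prod_left,
    integrableOn_one_div_sq_add_pow_succ n hc ha⟩
  rw [setIntegral_congr_fun measurableSet_Ioi hinner, integral_integral_swap hkernel,
    ← integral_const_mul]
  exact setIntegral_congr_fun measurableSet_Ici fun ζ hζ =>
    integral_pow_two_mul_add_one_mul_exp_neg_mul_sq n (sq_add_pos_of_le hc ha hζ)

theorem integral_sq_exp_mul_erfc_eq (a : ℝ) (ha : 0 ≤ a) :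
    (∫ ρ in Set.Ioi (0:ℝ),
        ρ ^ 2 * Real.exp (-a * ρ ^ 2) * ∫ η in Set.Ioi ρ, Real.exp (-η ^ 2))
      = (1 / 2) * ∫ ζ in Set.Ici (1:ℝ), 1 / (ζ ^ 2 + a) ^ 2 ∧
    IntegrableOn
      (fun ρ => ρ ^ 2 * Real.exp (-a * ρ ^ 2) * ∫ η in Set.Ioi ρ, Real.exp (-η ^ 2))
      (Set.Ioi (0:ℝ)) ∧
    IntegrableOn (fun ζ => 1 / (ζ ^ 2 + a) ^ 2) (Set.Ici (1:ℝ)) := by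
  simpa using integral_sq_exp_mul_erfc_eq_general 1 zero_le_one (by positivity : 0 < 1 ^ 2 + a)
end

section
/- Let k ≥ 2 be an integer, L ∈ ℝ, and ε ∈ (2/5, 1/2). Then as t → 0⁺, ∫₀^{t^ε} (e^{−r²/t} + L r² t^{−1/2} ∫_{r t^{−1/2}}^∞ e^{−η²} dη)^k (1 − r L) dr = (1/2)(π t / k)^{1/2} + t L { −1/(2k) + (k/2)( π/(4(k−1)^{3/2}) − 1/(2k(k−1)) − arctan((k−1)^{−1/2})/(2(k−1)^{3/2}) ) } + o(t). -/
open MeasureTheory Filter Topology Real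

/-!
With `r = √t u` the integrand becomes `(e^{-u²} + σ u² G(u))^k (1 - σ u)`, where `σ = L √t` and `G`
is the Gaussian tail integral. This is a polynomial in `σ` whose coefficients are integrable on
`(0, ∞)`, so integrating it up to `t^(ε - 1/2) → ∞` and keeping the first two coefficients gives
the expansion; replacing the cutoff by `∞` in the leading coefficient costs a Gaussian tail,
smaller than any power of `t`. The first-order coefficient reduces to `∫ u² e^{-au²} G(u) du` with
`a = k - 1`, which integration by parts brings down to `∫ e^{-au²} G(u) du`. Writing
`G(u) = ∫_1^∞ u e^{-u²τ²} dτ` and exchanging the integrals, the latter is `∫_1^∞ dτ / (2 (a + τ²))`.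
-/

/-- The Gaussian tail integral, `√π / 2` times the complementary error function. -/
noncomputable def gaussTail (u : ℝ) : ℝ := ∫ η in Set.Ioi u, exp (-η ^ 2)

lemma integrable_exp_neg_sq : Integrable fun x : ℝ => exp (-x ^ 2) := by
  simpa using integrable_exp_neg_mul_sq (b := 1) one_pos

lemma exp_neg_sq_pow (u : ℝ) (n : ℕ) : exp (-u ^ 2) ^ n = exp (-(n : ℝ) * u ^ 2) := by
  rw [← exp_nat_mul, mul_neg, neg_mul]

lemma integrable_pow_mul_exp_neg_mul_sq {b : ℝ} (hb : 0 < b) (n : ℕ) :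
    Integrable fun x : ℝ => x ^ n * exp (-b * x ^ 2) := by
  simpa using integrable_rpow_mul_exp_neg_mul_sq hb (s := n) (by linarith [n.cast_nonneg (α := ℝ)])

lemma integral_Ioi_mul_exp_neg_mul_sq {b : ℝ} (hb : 0 < b) :
    ∫ u in Set.Ioi (0 : ℝ), u * exp (-b * u ^ 2) = (2 * b)⁻¹ := by
  have h := integral_mul_cexp_neg_mul_sq (b := b) (by simpa)
  exact_mod_cast h

lemma gaussTail_nonneg (u : ℝ) : 0 ≤ gaussTail u :=
  integral_nonneg fun _ => (exp_pos _).le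

lemma hasDerivAt_gaussTail (u : ℝ) : HasDerivAt gaussTail (-exp (-u ^ 2)) u := by
  have h : gaussTail = fun u => gaussTail 0 - ∫ η in (0 : ℝ)..u, exp (-η ^ 2) := by
    funext u
    exact eq_sub_of_add_eq' (intervalIntegral.integral_interval_add_Ioi
      integrable_exp_neg_sq.integrableOn integrable_exp_neg_sq.integrableOn)
  have hcont : Continuous fun η : ℝ => exp (-η ^ 2) := by fun_prop
  rw [h]
  exact (hcont.integral_hasStrictDerivAt 0 u).hasDerivAt.const_sub _

@[fun_prop]
lemma continuous_gaussTail : Continuous gaussTail :=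
  continuous_iff_continuousAt.2 fun u => (hasDerivAt_gaussTail u).continuousAt

lemma gaussTail_le {u : ℝ} (hu : 0 ≤ u) : gaussTail u ≤ √π * exp (-u ^ 2) := by
  have hint : Integrable fun η : ℝ => exp (-(η - u) ^ 2) * exp (-u ^ 2) :=
    (integrable_exp_neg_sq.comp_sub_right u).mul_const _
  calc gaussTail u
      ≤ ∫ η in Set.Ioi u, exp (-(η - u) ^ 2) * exp (-u ^ 2) := by
        refine setIntegral_mono_on integrable_exp_neg_sq.integrableOn hint.integrableOn
          measurableSet_Ioi fun η hη => ?_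
        rw [← exp_add, exp_le_exp]
        nlinarith [mul_nonneg hu (sub_nonneg.2 (Set.mem_Ioi.1 hη).le)]
    _ ≤ ∫ η : ℝ, exp (-(η - u) ^ 2) * exp (-u ^ 2) :=
        setIntegral_le_integral hint (Eventually.of_forall fun _ => by positivity)
    _ = √π * exp (-u ^ 2) := by
        rw [integral_mul_const, integral_sub_right_eq_self (fun η : ℝ => exp (-η ^ 2)) u]
        simpa using integral_gaussian 1

lemma isLittleO_gaussTail_rpow (b : ℝ) : gaussTail =o[atTop] fun x => x ^ b := by
  have hbound : gaussTail =O[atTop] fun x => exp (-1 * x ^ 2) := by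
    refine .of_bound √π ?_
    filter_upwards [eventually_ge_atTop 0] with x hx
    rw [norm_of_nonneg (gaussTail_nonneg x), norm_of_nonneg (exp_pos _).le, neg_one_mul]
    exact gaussTail_le hx
  have hexp : (fun x : ℝ => exp (-x)) =o[atTop] fun x => x ^ b := by
    simpa using isLittleO_exp_neg_mul_rpow_atTop one_pos b
  exact hbound.trans_isLittleO ((exp_neg_mul_sq_isLittleO_exp_neg one_pos).trans hexp)

lemma gaussTail_eq_integral_Ioi_one {u : ℝ} (hu : 0 < u) :
    gaussTail u = ∫ τ in Set.Ioi (1 : ℝ), u * exp (-(u * τ) ^ 2) := by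
  rw [integral_const_mul, integral_comp_mul_left_Ioi (fun η => exp (-η ^ 2)) 1 hu]
  simp [gaussTail, hu.ne']

lemma integrableOn_pow_mul_exp_mul_gaussTail_pow {a : ℝ} (n j : ℕ) (ha : 0 < a + j) :
    IntegrableOn (fun u => u ^ n * exp (-a * u ^ 2) * gaussTail u ^ j) (Set.Ioi 0) := by
  refine Integrable.mono' ((integrable_pow_mul_exp_neg_mul_sq ha n).const_mul (√π ^ j)).integrableOn
    (by fun_prop) ?_
  filter_upwards [ae_restrict_mem measurableSet_Ioi] with u hu
  have hu : 0 < u := hu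
  have hG := gaussTail_nonneg u
  rw [norm_of_nonneg (by positivity)]
  calc u ^ n * exp (-a * u ^ 2) * gaussTail u ^ j
      ≤ u ^ n * exp (-a * u ^ 2) * (√π * exp (-u ^ 2)) ^ j := by
        gcongr
        exact gaussTail_le hu.le
    _ = √π ^ j * (u ^ n * exp (-(a + j) * u ^ 2)) := by
        rw [mul_pow, exp_neg_sq_pow, show -(a + j) * u ^ 2 = -a * u ^ 2 + -j * u ^ 2 by ring,
          exp_add]
        ring

lemma inv_add_sq_eq {a : ℝ} (ha : 0 < a) (τ : ℝ) :
    (a + τ ^ 2)⁻¹ = a⁻¹ * (1 + ((√a)⁻¹ * τ) ^ 2)⁻¹ := by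
  rw [mul_pow, inv_pow, sq_sqrt ha.le, ← mul_inv, mul_add, mul_inv_cancel_left₀ ha.ne', mul_one]

lemma integrable_inv_add_sq {a : ℝ} (ha : 0 < a) : Integrable fun τ : ℝ => (a + τ ^ 2)⁻¹ := by
  simp_rw [inv_add_sq_eq ha]
  exact (integrable_inv_one_add_sq.comp_mul_left' (by positivity)).const_mul _

lemma integral_Ioi_inv_add_sq {a : ℝ} (ha : 0 < a) (x : ℝ) :
    ∫ τ in Set.Ioi x, (a + τ ^ 2)⁻¹ = (π / 2 - arctan ((√a)⁻¹ * x)) / √a := by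
  have hs : 0 < √a := sqrt_pos.2 ha
  simp_rw [inv_add_sq_eq ha]
  rw [integral_const_mul, integral_comp_mul_left_Ioi (fun y => (1 + y ^ 2)⁻¹) x (inv_pos.2 hs),
    integral_Ioi_inv_one_add_sq, smul_eq_mul, inv_inv]
  field_simp
  rw [sq_sqrt ha.le]

lemma integral_Ioi_exp_mul_gaussTail {a : ℝ} (ha : 0 < a) :
    ∫ u in Set.Ioi (0 : ℝ), exp (-a * u ^ 2) * gaussTail u =
      (π / 2 - arctan (√a)⁻¹) / (2 * √a) := by
  have hinner (τ : ℝ) :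
      ∫ u in Set.Ioi (0 : ℝ), u * exp (-(a + τ ^ 2) * u ^ 2) = 2⁻¹ * (a + τ ^ 2)⁻¹ := by
    rw [integral_Ioi_mul_exp_neg_mul_sq (by positivity), mul_inv]
  have hint : Integrable (Function.uncurry fun τ u : ℝ => u * exp (-(a + τ ^ 2) * u ^ 2))
      ((volume.restrict (Set.Ioi 1)).prod (volume.restrict (Set.Ioi 0))) := by
    have hcont : Continuous (Function.uncurry fun τ u : ℝ => u * exp (-(a + τ ^ 2) * u ^ 2)) := by
      unfold Function.uncurry
      fun_prop
    refine (integrable_prod_iff hcont.aestronglyMeasurable).2 ⟨Eventually.of_forall fun τ =>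
      (integrable_mul_exp_neg_mul_sq (b := a + τ ^ 2) (by positivity)).integrableOn, ?_⟩
    refine ((integrable_inv_add_sq ha).const_mul 2⁻¹).integrableOn.congr
      (Eventually.of_forall fun τ => (hinner τ).symm.trans ?_)
    refine setIntegral_congr_fun measurableSet_Ioi fun u hu => (norm_of_nonneg ?_).symm
    exact mul_nonneg (Set.mem_Ioi.1 hu).le (exp_pos _).le
  calc ∫ u in Set.Ioi (0 : ℝ), exp (-a * u ^ 2) * gaussTail u
      = ∫ u in Set.Ioi (0 : ℝ), ∫ τ in Set.Ioi (1 : ℝ), u * exp (-(a + τ ^ 2) * u ^ 2) := by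
        refine setIntegral_congr_fun measurableSet_Ioi fun u hu => ?_
        simp only [gaussTail_eq_integral_Ioi_one (Set.mem_Ioi.1 hu), ← integral_const_mul]
        congr with τ
        rw [mul_left_comm, ← exp_add]
        ring_nf
    _ = ∫ τ in Set.Ioi (1 : ℝ), 2⁻¹ * (a + τ ^ 2)⁻¹ := by
        rw [← integral_integral_swap hint]
        simp_rw [hinner]
    _ = (π / 2 - arctan (√a)⁻¹) / (2 * √a) := by
        rw [integral_const_mul, integral_Ioi_inv_add_sq ha, mul_one]
        ring

lemma integral_Ioi_sq_mul_exp_mul_gaussTail {a : ℝ} (ha : 0 < a) :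
    ∫ u in Set.Ioi (0 : ℝ), u ^ 2 * exp (-a * u ^ 2) * gaussTail u =
      ((π / 2 - arctan (√a)⁻¹) / (2 * √a) - (2 * (a + 1))⁻¹) / (2 * a) := by
  have hG (n : ℕ) : IntegrableOn (fun u => u ^ n * exp (-a * u ^ 2) * gaussTail u) (Set.Ioi 0) := by
    simpa using integrableOn_pow_mul_exp_mul_gaussTail_pow n 1 (by positivity : 0 < a + (1 : ℕ))
  have hG0 : IntegrableOn (fun u => exp (-a * u ^ 2) * gaussTail u) (Set.Ioi 0) := by
    simpa using hG 0
  have hG1 : IntegrableOn (fun u => u * exp (-a * u ^ 2) * gaussTail u) (Set.Ioi 0) := by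
    simpa using hG 1
  have hE : IntegrableOn (fun u => u * exp (-(a + 1) * u ^ 2)) (Set.Ioi 0) :=
    (integrable_mul_exp_neg_mul_sq (by positivity)).integrableOn
  have hderiv (u : ℝ) : HasDerivAt (fun u => u * exp (-a * u ^ 2) * gaussTail u)
      (exp (-a * u ^ 2) * gaussTail u - 2 * a * (u ^ 2 * exp (-a * u ^ 2) * gaussTail u)
        - u * exp (-(a + 1) * u ^ 2)) u := by
    have hexp : exp (-(a + 1) * u ^ 2) = exp (-a * u ^ 2) * exp (-u ^ 2) := by
      rw [← exp_add]
      ring_nf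
    refine (((hasDerivAt_id u).mul (((hasDerivAt_pow 2 u).const_mul (-a)).exp)).mul
      (hasDerivAt_gaussTail u)).congr_deriv ?_
    simp only [id, Pi.mul_apply, hexp]
    ring
  have hdiff : IntegrableOn (fun u => exp (-a * u ^ 2) * gaussTail u
      - 2 * a * (u ^ 2 * exp (-a * u ^ 2) * gaussTail u)) (Set.Ioi 0) :=
    hG0.sub ((hG 2).const_mul _)
  have hparts := integral_Ioi_of_hasDerivAt_of_tendsto' (a := 0) (fun u _ => hderiv u)
    (hdiff.sub hE) (tendsto_zero_of_hasDerivAt_of_integrableOn_Ioi (fun u _ => hderiv u)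
      (hdiff.sub hE) hG1)
  rw [integral_sub hdiff hE, integral_sub hG0 ((hG 2).const_mul _), integral_const_mul,
    integral_Ioi_exp_mul_gaussTail ha, integral_Ioi_mul_exp_neg_mul_sq (by positivity)] at hparts
  rw [eq_div_iff (by positivity)]
  linarith

lemma tendsto_intervalIntegral_sum_pow_mul {α : Type*} {l : Filter α} [l.IsCountablyGenerated]
    {σ T : α → ℝ} {a : ℝ} {c : ℕ → ℝ → ℝ} (n : ℕ) (hc : ∀ j, IntegrableOn (c j) (Set.Ioi a))
    (hσ : Tendsto σ l (𝓝 0)) (hT : Tendsto T l atTop) :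
    Tendsto (fun x => ∫ u in a..T x, ∑ j ∈ Finset.range (n + 1), σ x ^ j * c j u) l
      (𝓝 (∫ u in Set.Ioi a, c 0 u)) := by
  have hterm (j : ℕ) : Tendsto (fun x => σ x ^ j * ∫ u in a..T x, c j u) l
      (𝓝 (0 ^ j * ∫ u in Set.Ioi a, c j u)) :=
    (hσ.pow j).mul (intervalIntegral_tendsto_integral_Ioi a (hc j) hT)
  have hlim : ∑ j ∈ Finset.range (n + 1), 0 ^ j * ∫ u in Set.Ioi a, c j u =
      ∫ u in Set.Ioi a, c 0 u := by
    simp [Finset.sum_range_succ']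
  rw [← hlim]
  refine (tendsto_finsetSum _ fun j _ => hterm j).congr' ?_
  filter_upwards [hT.eventually_ge_atTop a] with x hx
  rw [intervalIntegral.integral_finsetSum fun j _ => ((intervalIntegrable_iff_integrableOn_Ioc_of_le
    hx).2 ((hc j).mono_set Set.Ioc_subset_Ioi_self)).const_mul _]
  simp_rw [intervalIntegral.integral_const_mul]

/-- The integrand in the variable `u = r / √t`, in which the curvature `L` enters only through
`σ = L √t`. -/
noncomputable def layerIntegrand (k : ℕ) (σ u : ℝ) : ℝ :=
  (exp (-u ^ 2) + σ * (u ^ 2 * gaussTail u)) ^ k * (1 - σ * u)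

/-- The coefficient of `σ ^ j` in the `k`-th power occurring in `layerIntegrand k σ u`. -/
noncomputable def layerCoeff (k j : ℕ) (u : ℝ) : ℝ :=
  k.choose j * exp (-u ^ 2) ^ (k - j) * (u ^ 2 * gaussTail u) ^ j

@[fun_prop]
lemma continuous_layerIntegrand (k : ℕ) (σ : ℝ) : Continuous (layerIntegrand k σ) := by
  unfold layerIntegrand
  fun_prop

lemma integrableOn_pow_mul_layerCoeff {k : ℕ} (hk : 0 < k) (n j : ℕ) :
    IntegrableOn (fun u => u ^ n * layerCoeff k j u) (Set.Ioi 0) := by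
  have hpos : 0 < ((k - j : ℕ) : ℝ) + j := by
    norm_cast
    omega
  refine ((integrableOn_pow_mul_exp_mul_gaussTail_pow (n + 2 * j) j hpos).const_mul
    (k.choose j : ℝ)).congr (Eventually.of_forall fun u => ?_)
  simp only [layerCoeff, exp_neg_sq_pow]
  ring

lemma layerIntegrand_eq_add_mul_sum (k : ℕ) (σ u : ℝ) :
    layerIntegrand k σ u = exp (-u ^ 2) ^ k + σ * ∑ j ∈ Finset.range (k + 1),
      σ ^ j * (layerCoeff k (j + 1) u - u * layerCoeff k j u) := by
  have hpow : (exp (-u ^ 2) + σ * (u ^ 2 * gaussTail u)) ^ k =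
      ∑ j ∈ Finset.range (k + 1), σ ^ j * layerCoeff k j u := by
    rw [add_comm, add_pow]
    refine Finset.sum_congr rfl fun j _ => ?_
    rw [layerCoeff, mul_pow]
    ring
  have hshift : ∑ j ∈ Finset.range (k + 1), σ ^ j * layerCoeff k j u =
      exp (-u ^ 2) ^ k + σ * ∑ j ∈ Finset.range (k + 1), σ ^ j * layerCoeff k (j + 1) u := by
    have hlast : layerCoeff k (k + 1) u = 0 := by simp [layerCoeff]
    rw [Finset.sum_range_succ', Finset.sum_range_succ _ k, hlast, mul_zero, add_zero,
      Finset.mul_sum, add_comm]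
    simp [layerCoeff, pow_succ', mul_assoc]
  simp only [layerIntegrand, hpow, mul_sub, Finset.sum_sub_distrib, mul_left_comm _ u,
    ← Finset.mul_sum]
  rw [mul_one, hshift]
  ring

lemma isLittleO_integral_layerIntegrand_sub {α : Type*} {l : Filter α} [l.IsCountablyGenerated]
    {k : ℕ} (hk : 0 < k) {σ T : α → ℝ} (hσ : Tendsto σ l (𝓝 0)) (hT : Tendsto T l atTop) :
    (fun x => (∫ u in 0..T x, layerIntegrand k (σ x) u) - (∫ u in 0..T x, exp (-u ^ 2) ^ k)
      - σ x * ∫ u in Set.Ioi 0, (layerCoeff k 1 u - u * layerCoeff k 0 u)) =o[l] σ := by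
  have hc (j : ℕ) :
      IntegrableOn (fun u => layerCoeff k (j + 1) u - u * layerCoeff k j u) (Set.Ioi 0) :=
    (by simpa using integrableOn_pow_mul_layerCoeff hk 0 (j + 1) :
      IntegrableOn (layerCoeff k (j + 1)) (Set.Ioi 0)).sub
      (by simpa using integrableOn_pow_mul_layerCoeff hk 1 j)
  have hquot := (tendsto_intervalIntegral_sum_pow_mul k hc hσ hT).sub_const
    (∫ u in Set.Ioi 0, (layerCoeff k 1 u - u * layerCoeff k 0 u))
  rw [sub_self] at hquot
  refine ((Asymptotics.isBigO_refl σ l).mul_isLittleO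
    ((Asymptotics.isLittleO_one_iff ℝ).2 hquot)).congr (fun x => ?_) fun x => mul_one _
  have hexp : Continuous fun u : ℝ => exp (-u ^ 2) ^ k := by fun_prop
  rw [mul_sub, ← intervalIntegral.integral_const_mul, ← intervalIntegral.integral_sub
    ((continuous_layerIntegrand k _).intervalIntegrable 0 _) (hexp.intervalIntegrable 0 _)]
  simp_rw [layerIntegrand_eq_add_mul_sum, add_sub_cancel_left]

lemma isLittleO_integral_exp_neg_sq_pow_sub {k : ℕ} (hk : 0 < k) (b : ℝ) :
    (fun x => (∫ u in 0..x, exp (-u ^ 2) ^ k) - √(π / k) / 2) =o[atTop] fun x => x ^ b := by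
  have hint : Integrable fun u : ℝ => exp (-u ^ 2) ^ k := by
    simp_rw [exp_neg_sq_pow]
    exact integrable_exp_neg_mul_sq (by positivity)
  have htail (x : ℝ) : (∫ u in 0..x, exp (-u ^ 2) ^ k) - √(π / k) / 2 =
      -∫ u in Set.Ioi x, exp (-u ^ 2) ^ k := by
    simp_rw [← integral_gaussian_Ioi, ← exp_neg_sq_pow]
    rw [← intervalIntegral.integral_interval_add_Ioi hint.integrableOn hint.integrableOn (b := x),
      sub_add_cancel_left]
  refine (Asymptotics.IsBigO.of_bound 1 (Eventually.of_forall fun x => ?_)).trans_isLittleO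
    (isLittleO_gaussTail_rpow b)
  rw [htail, norm_neg, one_mul, norm_of_nonneg (integral_nonneg fun _ => by positivity),
    norm_of_nonneg (gaussTail_nonneg x)]
  refine integral_mono hint.integrableOn integrable_exp_neg_sq.integrableOn fun u => ?_
  exact pow_le_of_le_one (exp_pos _).le (exp_le_one_iff.2 (by nlinarith)) hk.ne'

/-- The coefficient `c_{k,2}` of `t L` in the expansion. -/
noncomputable def curvatureCoeff (k : ℕ) : ℝ :=
  -(1 / (2 * (k : ℝ))) + ((k : ℝ) / 2) * (π / (4 * ((k : ℝ) - 1) ^ ((3 : ℝ) / 2))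
    - 1 / (2 * (k : ℝ) * ((k : ℝ) - 1))
    - arctan (((k : ℝ) - 1) ^ (-(1 : ℝ) / 2)) / (2 * ((k : ℝ) - 1) ^ ((3 : ℝ) / 2)))

lemma integral_Ioi_layerCoeff_sub {k : ℕ} (hk : 2 ≤ k) :
    ∫ u in Set.Ioi 0, (layerCoeff k 1 u - u * layerCoeff k 0 u) = curvatureCoeff k := by
  have hk0 : (0 : ℝ) < k := by positivity
  have ha : (0 : ℝ) < k - 1 := by
    rw [sub_pos]
    exact_mod_cast hk
  have hcoeff (u : ℝ) : layerCoeff k 1 u - u * layerCoeff k 0 u =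
      k * (u ^ 2 * exp (-((k : ℝ) - 1) * u ^ 2) * gaussTail u) - u * exp (-(k : ℝ) * u ^ 2) := by
    simp only [layerCoeff, exp_neg_sq_pow, Nat.cast_pred (by lia : 0 < k), Nat.choose_one_right,
      Nat.choose_zero_right, Nat.sub_zero, Nat.cast_one, pow_one, pow_zero]
    ring
  have htail := integrableOn_pow_mul_exp_mul_gaussTail_pow (a := (k : ℝ) - 1) 2 1
    (by simpa using hk0)
  simp only [pow_one] at htail
  simp_rw [hcoeff]
  rw [integral_sub (htail.const_mul _) (integrable_mul_exp_neg_mul_sq hk0).integrableOn,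
    integral_const_mul, integral_Ioi_sq_mul_exp_mul_gaussTail ha,
    integral_Ioi_mul_exp_neg_mul_sq hk0, curvatureCoeff]
  have hpow : ((k : ℝ) - 1) ^ ((3 : ℝ) / 2) = (k - 1) * √(k - 1) := by
    rw [sqrt_eq_rpow, ← rpow_one_add' ha.le (by norm_num)]
    norm_num
  have hinv : ((k : ℝ) - 1) ^ (-(1 : ℝ) / 2) = (√(k - 1))⁻¹ := by
    rw [neg_div, rpow_neg ha.le, ← sqrt_eq_rpow]
  rw [hpow, hinv, sub_add_cancel]
  field_simp
  ring

lemma isLittleO_integral_layerIntegrand_sqrt_sub {k : ℕ} (hk : 2 ≤ k) (L : ℝ) {ε : ℝ}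
    (hε : ε < 1 / 2) :
    (fun t : ℝ => (∫ u in 0..t ^ (ε - 1 / 2), layerIntegrand k (√t * L) u)
      - (√(π / k) / 2 + √t * L * curvatureCoeff k)) =o[𝓝[>] 0] sqrt := by
  have hsqrt : Tendsto sqrt (𝓝[>] 0) (𝓝 0) :=
    tendsto_nhdsWithin_of_tendsto_nhds (by simpa using continuous_sqrt.tendsto 0)
  have hT : Tendsto (fun t : ℝ => t ^ (ε - 1 / 2)) (𝓝[>] 0) atTop :=
    tendsto_rpow_neg_nhdsGT_zero (by linarith)
  have hσ : (fun t => √t * L) =O[𝓝[>] 0] sqrt := by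
    simpa [mul_comm] using Asymptotics.isBigO_const_mul_self L sqrt (𝓝[>] 0)
  have hfirst := (isLittleO_integral_layerIntegrand_sub (k := k) (by lia)
    (by simpa using hsqrt.mul_const L) hT).trans_isBigO hσ
  have hlead : (fun t : ℝ => (∫ u in 0..t ^ (ε - 1 / 2), exp (-u ^ 2) ^ k) - √(π / k) / 2)
      =o[𝓝[>] 0] sqrt := by
    refine ((isLittleO_integral_exp_neg_sq_pow_sub (k := k) (by lia)
      (1 / 2 / (ε - 1 / 2))).comp_tendsto hT).congr' .rfl ?_
    filter_upwards [self_mem_nhdsWithin] with t ht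
    rw [Function.comp_apply, ← rpow_mul (Set.mem_Ioi.1 ht).le,
      mul_div_cancel₀ _ (sub_neg.2 hε).ne, sqrt_eq_rpow]
  refine (hfirst.add hlead).congr_left fun t => ?_
  rw [integral_Ioi_layerCoeff_sub hk]
  ring

/-- The boundary-layer integrand at distance `r` from a boundary point of curvature `L`: the `k`-th
power of the expansion of `4πt (p_{ℝ²}(x,x;t) - p_D(x,x;t))`, times the Jacobian `1 - r L` of the
boundary normal coordinates. -/
noncomputable def boundaryIntegrand (k : ℕ) (L t r : ℝ) : ℝ :=
  (exp (-r ^ 2 / t) + L * r ^ 2 * t ^ (-(1 : ℝ) / 2) * gaussTail (r * t ^ (-(1 : ℝ) / 2))) ^ k *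
    (1 - r * L)

lemma boundaryIntegrand_sqrt_mul (k : ℕ) (L u : ℝ) {t : ℝ} (ht : 0 < t) :
    boundaryIntegrand k L t (√t * u) = layerIntegrand k (√t * L) u := by
  have hinv : t ^ (-(1 : ℝ) / 2) = (√t)⁻¹ := by
    rw [neg_div, rpow_neg ht.le, ← sqrt_eq_rpow]
  have hexp : -(√t * u) ^ 2 / t = -u ^ 2 := by
    rw [mul_pow, sq_sqrt ht.le, neg_div, mul_div_cancel_left₀ _ ht.ne']
  have hcurv : L * (√t * u) ^ 2 * (√t)⁻¹ = √t * L * u ^ 2 := by field_simp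
  have htail : √t * u * (√t)⁻¹ = u := by field_simp
  rw [boundaryIntegrand, layerIntegrand, hinv, hexp, hcurv, htail]
  ring

lemma integral_boundaryIntegrand (k : ℕ) (L ε : ℝ) {t : ℝ} (ht : 0 < t) :
    ∫ r in Set.Ioc 0 (t ^ ε), boundaryIntegrand k L t r =
      √t * ∫ u in 0..t ^ (ε - 1 / 2), layerIntegrand k (√t * L) u := by
  have hcutoff : √t * t ^ (ε - 1 / 2) = t ^ ε := by
    rw [sqrt_eq_rpow, ← rpow_add ht, add_sub_cancel]
  simp_rw [← boundaryIntegrand_sqrt_mul k L _ ht]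
  rw [intervalIntegral.mul_integral_comp_mul_left (f := boundaryIntegrand k L t), mul_zero,
    hcutoff, intervalIntegral.integral_of_le (by positivity)]

theorem pinned_sausage_boundary_expansion_general (k : ℕ) (hk : 2 ≤ k) (L ε : ℝ)
    (hε : ε < 1 / 2) :
    (fun t : ℝ => (∫ r in Set.Ioc 0 (t ^ ε), boundaryIntegrand k L t r)
      - ((1 / 2) * √(π * t / k) + t * L * curvatureCoeff k)) =o[𝓝[>] 0] fun t => t := by
  refine ((Asymptotics.isBigO_refl sqrt _).mul_isLittleO
    (isLittleO_integral_layerIntegrand_sqrt_sub hk L hε)).congr' ?_ ?_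
  · filter_upwards [self_mem_nhdsWithin] with t ht
    have ht : 0 < t := ht
    have hroot : √(π * t / k) = √t * √(π / k) := by
      rw [mul_comm π, mul_div_assoc, sqrt_mul ht.le]
    rw [integral_boundaryIntegrand k L ε ht, hroot]
    linear_combination (-L * curvatureCoeff k) * mul_self_sqrt ht.le
  · filter_upwards [self_mem_nhdsWithin] with t ht
    exact mul_self_sqrt (Set.mem_Ioi.1 ht).le

theorem pinned_sausage_boundary_expansion (k : ℕ) (hk : 2 ≤ k) (L ε : ℝ)
    (hε1 : 2/5 < ε) (hε2 : ε < 1/2) :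
    (fun t : ℝ =>
        (∫ r in Set.Ioc (0:ℝ) (t ^ ε),
            (Real.exp (-r ^ 2 / t) +
              L * r ^ 2 * t ^ (-(1:ℝ)/2) *
                ∫ η in Set.Ioi (r * t ^ (-(1:ℝ)/2)), Real.exp (-η ^ 2)) ^ k *
              (1 - r * L))
          - ((1 / 2) * Real.sqrt (Real.pi * t / k) +
              t * L * (-(1 / (2 * (k:ℝ))) +
                ((k:ℝ) / 2) *
                  (Real.pi / (4 * ((k:ℝ) - 1) ^ ((3:ℝ)/2))
                    - 1 / (2 * (k:ℝ) * ((k:ℝ) - 1))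
                    - Real.arctan (((k:ℝ) - 1) ^ (-(1:ℝ)/2)) /
                        (2 * ((k:ℝ) - 1) ^ ((3:ℝ)/2))))))
      =o[𝓝[>] (0:ℝ)] fun t => t :=
  pinned_sausage_boundary_expansion_general k hk L ε hε2
end

section
/- For every positive integer k, ∫₀^∞ (∫_r^∞ e^{−η²} dη)^k dr = (1/2) Γ((k+1)/2) ∫_{[1,∞)^k} (η₁² + ⋯ + η_k²)^{−(k+1)/2} dη₁ ⋯ dη_k, and both sides are finite. -/
open MeasureTheory Real Finset

/-!
Substituting `η = r t` in each factor turns the `card ι`-th power of the tail `∫_r^∞ exp (-η ^ p)`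
into the integral of `r ^ card ι * exp (-S t * r ^ p)` over the box `[1, ∞)^ι`, where
`S t = ∑ i, t i ^ p`; a weight `r ^ m` only raises the power of `r`. After Fubini the integral over
`r` is a Gamma integral, a constant times `S t ^ (-(m + card ι + 1) / p)`. Finiteness comes from the
box side: `S t` dominates each `t i ^ p`, so for `m > -1` this negative power of `S t` is at most a
product of one-variable powers `t i ^ a` with `a < -1`.
-/

section BoxIntegrability

variable {ι : Type*} [Fintype ι]

theorem restrict_volume_univ_pi {X : ι → Type*} [∀ i, MeasureSpace (X i)]
    [∀ i, SigmaFinite (volume : Measure (X i))] {s : ∀ i, Set (X i)} :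
    (volume : Measure (∀ i, X i)).restrict (Set.univ.pi s) =
      Measure.pi fun i => volume.restrict (s i) := by
  rw [volume_pi, Measure.restrict_pi_pi]

theorem rpow_sum_le_prod_rpow_div_card [Nonempty ι] {x : ι → ℝ} (hx : ∀ i, 0 < x i) {s : ℝ}
    (hs : s ≤ 0) : (∑ i, x i) ^ s ≤ ∏ i, x i ^ (s / Fintype.card ι) := by
  have hcard : (Fintype.card ι : ℝ) ≠ 0 := Nat.cast_ne_zero.2 Fintype.card_ne_zero
  have hsum : 0 ≤ ∑ i, x i := sum_nonneg fun i _ => (hx i).le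
  calc (∑ i, x i) ^ s
      = ∏ _i : ι, (∑ j, x j) ^ (s / Fintype.card ι) := by
        rw [prod_const, card_univ, ← rpow_mul_natCast hsum, div_mul_cancel₀ s hcard]
    _ ≤ ∏ i, x i ^ (s / Fintype.card ι) :=
        prod_le_prod (fun _ _ => rpow_nonneg hsum _) fun i hi =>
          rpow_le_rpow_of_nonpos (hx i) (single_le_sum (fun j _ => (hx j).le) hi)
            (div_nonpos_of_nonpos_of_nonneg hs (Nat.cast_nonneg _))

theorem integrableOn_rpow_sum_rpow_pi_Ici [Nonempty ι] {a p s : ℝ} (ha : 0 < a) (hp : 0 < p)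
    (hs : p * s < -Fintype.card ι) :
    IntegrableOn (fun η : ι → ℝ => (∑ i, η i ^ p) ^ s) (Set.univ.pi fun _ => Set.Ici a) := by
  have hcard : (0 : ℝ) < Fintype.card ι := Nat.cast_pos.2 Fintype.card_pos
  have hs' : s ≤ 0 := by nlinarith
  have hexp : p * (s / Fintype.card ι) < -1 := by
    rwa [← mul_div_assoc, div_lt_iff₀ hcard, neg_one_mul]
  have hprod : IntegrableOn (fun η : ι → ℝ => ∏ i, η i ^ (p * (s / Fintype.card ι)))
      (Set.univ.pi fun _ => Set.Ici a) := by
    rw [IntegrableOn, restrict_volume_univ_pi]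
    exact Integrable.fintype_prod (f := fun _ x => x ^ (p * (s / Fintype.card ι))) fun _ =>
      (integrableOn_Ici_iff_integrableOn_Ioi (by finiteness)).2
        (integrableOn_Ioi_rpow_of_lt hexp ha)
  refine hprod.mono' (Measurable.aestronglyMeasurable (by fun_prop)) ?_
  filter_upwards [ae_restrict_mem (.univ_pi fun _ => measurableSet_Ici)] with η hη
  have hη : ∀ i, 0 < η i := fun i => ha.trans_le (hη i trivial)
  have hηp : ∀ i, 0 < η i ^ p := fun i => rpow_pos_of_pos (hη i) p
  rw [norm_of_nonneg (rpow_nonneg (sum_nonneg fun i _ => (hηp i).le) s)]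
  simpa only [← rpow_mul (hη _).le] using rpow_sum_le_prod_rpow_div_card hηp hs'

end BoxIntegrability

section GammaFubini

variable {α : Type*} [MeasurableSpace α] {μ : Measure α} {S : α → ℝ} {p q : ℝ}

theorem integrableOn_Ioi_rpow_mul_exp_neg_mul_rpow (hp : 0 < p) (hq : -1 < q) {b : ℝ}
    (hb : 0 < b) : IntegrableOn (fun r : ℝ => r ^ q * exp (-b * r ^ p)) (Set.Ioi 0) := by
  have hΓ : 0 < Gamma ((q + 1) / p) := Gamma_pos_of_pos (div_pos (by linarith) hp)
  refine Integrable.of_integral_ne_zero ?_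
  rw [integral_rpow_mul_exp_neg_mul_rpow hp hq hb]
  positivity

theorem integrable_prod_rpow_mul_exp_neg_mul_rpow [SFinite μ] (hp : 0 < p) (hq : -1 < q)
    (hS : AEMeasurable S μ) (hpos : ∀ᵐ y ∂μ, 0 < S y)
    (hint : Integrable (fun y => S y ^ (-(q + 1) / p)) μ) :
    Integrable (fun x : ℝ × α => x.1 ^ q * exp (-S x.2 * x.1 ^ p))
      ((volume.restrict (Set.Ioi 0)).prod μ) := by
  refine (integrable_prod_iff' (by fun_prop)).2 ⟨?_, ?_⟩
  · filter_upwards [hpos] with y hy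
    exact integrableOn_Ioi_rpow_mul_exp_neg_mul_rpow hp hq hy
  · refine (hint.mul_const (1 / p * Gamma ((q + 1) / p))).congr ?_
    filter_upwards [hpos] with y hy
    rw [← mul_assoc, ← integral_rpow_mul_exp_neg_mul_rpow hp hq hy]
    refine setIntegral_congr_fun measurableSet_Ioi fun r hr => ?_
    exact (norm_of_nonneg (mul_nonneg (rpow_nonneg (le_of_lt hr) q) (exp_nonneg _))).symm

theorem integral_integral_rpow_mul_exp_neg_mul_rpow [SFinite μ] (hp : 0 < p) (hq : -1 < q)
    (hS : AEMeasurable S μ) (hpos : ∀ᵐ y ∂μ, 0 < S y)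
    (hint : Integrable (fun y => S y ^ (-(q + 1) / p)) μ) :
    ∫ r in Set.Ioi (0 : ℝ), ∫ y, r ^ q * exp (-S y * r ^ p) ∂μ =
      1 / p * Gamma ((q + 1) / p) * ∫ y, S y ^ (-(q + 1) / p) ∂μ := by
  rw [integral_integral_swap (integrable_prod_rpow_mul_exp_neg_mul_rpow hp hq hS hpos hint),
    ← integral_const_mul]
  refine integral_congr_ae ?_
  filter_upwards [hpos] with y hy
  rw [integral_rpow_mul_exp_neg_mul_rpow hp hq hy]
  ring

end GammaFubini

section Tail

variable {ι : Type*} [Fintype ι] {p r : ℝ}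

theorem integral_Ioi_exp_neg_rpow_eq_mul_integral_Ici (hr : 0 < r) :
    ∫ η in Set.Ioi r, exp (-η ^ p) = r * ∫ η in Set.Ici (1 : ℝ), exp (-η ^ p * r ^ p) := by
  have hscale := integral_comp_mul_left_Ioi' (fun η : ℝ => exp (-η ^ p)) 1 hr
  rw [mul_one, smul_eq_mul] at hscale
  rw [← hscale, ← integral_Ici_eq_integral_Ioi]
  congr 1
  refine setIntegral_congr_fun measurableSet_Ici fun η hη => ?_
  rw [mul_rpow hr.le (zero_le_one.trans hη), mul_comm, neg_mul]

theorem integral_Ioi_exp_neg_rpow_pow_card (hr : 0 < r) :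
    (∫ η in Set.Ioi r, exp (-η ^ p)) ^ Fintype.card ι =
      r ^ Fintype.card ι * ∫ η in Set.univ.pi (fun _ : ι => Set.Ici (1 : ℝ)),
        exp (-(∑ i, η i ^ p) * r ^ p) := by
  rw [integral_Ioi_exp_neg_rpow_eq_mul_integral_Ici hr, mul_pow,
    ← integral_fintype_prod_eq_pow, ← restrict_volume_univ_pi]
  simp only [← exp_sum, ← sum_mul, sum_neg_distrib]

theorem rpow_mul_integral_Ioi_exp_neg_rpow_pow_card (m : ℝ) (hr : 0 < r) :
    r ^ m * (∫ η in Set.Ioi r, exp (-η ^ p)) ^ Fintype.card ι =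
      ∫ η in Set.univ.pi (fun _ : ι => Set.Ici (1 : ℝ)),
        r ^ (m + Fintype.card ι) * exp (-(∑ i, η i ^ p) * r ^ p) := by
  rw [integral_Ioi_exp_neg_rpow_pow_card hr, ← mul_assoc, ← rpow_add_natCast hr.ne',
    integral_const_mul]

end Tail

theorem integral_gaussian_tail_pow_general {ι : Type*} [Fintype ι] [Nonempty ι] {p m : ℝ}
    (hp : 0 < p) (hm : -1 < m) :
    (∫ r in Set.Ioi (0 : ℝ), r ^ m * (∫ η in Set.Ioi r, exp (-η ^ p)) ^ Fintype.card ι)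
        = 1 / p * Gamma ((m + Fintype.card ι + 1) / p) *
            ∫ η in Set.univ.pi (fun _ : ι => Set.Ici (1 : ℝ)),
              (∑ i, η i ^ p) ^ (-(m + Fintype.card ι + 1) / p) ∧
    IntegrableOn (fun r => r ^ m * (∫ η in Set.Ioi r, exp (-η ^ p)) ^ Fintype.card ι)
      (Set.Ioi (0 : ℝ)) ∧
    IntegrableOn (fun η : ι → ℝ => (∑ i, η i ^ p) ^ (-(m + Fintype.card ι + 1) / p))
      (Set.univ.pi fun _ => Set.Ici (1 : ℝ)) := by
  have hq : -1 < m + Fintype.card ι := by linarith [(Fintype.card ι).cast_nonneg (α := ℝ)]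
  have hS : Measurable fun η : ι → ℝ => ∑ i, η i ^ p := by fun_prop
  have hpos : ∀ᵐ η ∂volume.restrict (Set.univ.pi fun _ : ι => Set.Ici (1 : ℝ)),
      0 < ∑ i, η i ^ p := by
    filter_upwards [ae_restrict_mem (.univ_pi fun _ => measurableSet_Ici)] with η hη
    exact sum_pos (fun i _ => rpow_pos_of_pos (one_pos.trans_le (hη i trivial)) p) univ_nonempty
  have hbox := integrableOn_rpow_sum_rpow_pi_Ici (ι := ι) (p := p)
    (s := -(m + Fintype.card ι + 1) / p) one_pos hp (by rw [mul_div_cancel₀ _ hp.ne']; linarith)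
  have htail : Set.EqOn
      (fun r : ℝ => r ^ m * (∫ η in Set.Ioi r, exp (-η ^ p)) ^ Fintype.card ι)
      (fun r => ∫ η in Set.univ.pi (fun _ : ι => Set.Ici (1 : ℝ)),
        r ^ (m + Fintype.card ι) * exp (-(∑ i, η i ^ p) * r ^ p)) (Set.Ioi 0) :=
    fun _ hr => rpow_mul_integral_Ioi_exp_neg_rpow_pow_card m hr
  refine ⟨?_, ?_, hbox⟩
  · rw [setIntegral_congr_fun measurableSet_Ioi htail]
    exact integral_integral_rpow_mul_exp_neg_mul_rpow hp hq hS.aemeasurable hpos hbox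
  · rw [integrableOn_congr_fun htail measurableSet_Ioi]
    exact (integrable_prod_rpow_mul_exp_neg_mul_rpow hp hq hS.aemeasurable hpos
      hbox).integral_prod_left

theorem integral_gaussian_tail_pow (k : ℕ) (hk : 1 ≤ k) :
    (∫ r in Set.Ioi (0:ℝ), (∫ η in Set.Ioi r, Real.exp (-η ^ 2)) ^ k)
        = (1 / 2) * Real.Gamma (((k : ℝ) + 1) / 2) *
            ∫ η in Set.univ.pi (fun _ : Fin k => Set.Ici (1:ℝ)),
              (∑ i, (η i) ^ 2) ^ (-((k : ℝ) + 1) / 2) ∧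
    IntegrableOn (fun r => (∫ η in Set.Ioi r, Real.exp (-η ^ 2)) ^ k)
      (Set.Ioi (0:ℝ)) ∧
    IntegrableOn (fun η : Fin k → ℝ => (∑ i, (η i) ^ 2) ^ (-((k : ℝ) + 1) / 2))
      (Set.univ.pi fun _ : Fin k => Set.Ici (1:ℝ)) volume := by
  have : Nonempty (Fin k) := ⟨⟨0, hk⟩⟩
  simpa only [rpow_zero, one_mul, zero_add, Fintype.card_fin, rpow_two] using
    integral_gaussian_tail_pow_general (ι := Fin k) two_pos neg_one_lt_zero
end

section
/- For every positive integer k, ∫₀^∞ r (∫_r^∞ e^{−η²} dη)^k dr = (1/2) Γ((k+2)/2) ∫_{[1,∞)^k} (η₁² + ⋯ + η_k²)^{−(k+2)/2} dη₁ ⋯ dη_k, and both sides are finite. -/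
open MeasureTheory Real Finset

/-! Write `T r` for the tail integral of `exp (-η ^ p)` over `(r, ∞)`. Substituting `η = r x` moves
the dependence on `r` from the domain of integration to the integrand: `r ^ q * T r ^ k` is the
integral of `r ^ (q + k) * exp (-(∑ i, x i ^ p) * r ^ p)` over `x` in `[1, ∞) ^ k`, so that Fubini's
theorem leaves a Gamma integral in `r`. By Tonelli's theorem everything is finite as soon as
`r ^ q * T r ^ k` is integrable, which holds because `T r` is `O(exp (-r ^ p / 2))`. -/

section Fubini

variable {α β : Type*} [MeasurableSpace α] [MeasurableSpace β] {μ : Measure α} {ν : Measure β}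

lemma integrable_uncurry_of_nonneg [SFinite ν] {f : α → β → ℝ}
    (hf : AEStronglyMeasurable (Function.uncurry f) (μ.prod ν)) (hf_nonneg : ∀ᵐ x ∂μ, 0 ≤ᵐ[ν] f x)
    (hf_int : ∀ᵐ x ∂μ, Integrable (f x) ν) (hf_int_int : Integrable (fun x ↦ ∫ y, f x y ∂ν) μ) :
    Integrable (Function.uncurry f) (μ.prod ν) := by
  refine (integrable_prod_iff hf).2 ⟨hf_int, hf_int_int.congr ?_⟩
  filter_upwards [hf_nonneg] with x hx
  exact integral_congr_ae (hx.mono fun y hy ↦ (norm_of_nonneg hy).symm)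

end Fubini

section Scaling

variable {ι : Type*} [Fintype ι] {f : ℝ → ℝ} {p r : ℝ}

lemma setIntegral_Ioi_pow_card (hr : 0 < r) :
    (∫ η in Set.Ioi r, f η) ^ Fintype.card ι =
      r ^ Fintype.card ι * ∫ x in Set.univ.pi fun _ : ι ↦ Set.Ici 1, ∏ i, f (r * x i) := by
  have hscale : ∫ η in Set.Ioi r, f η = r * ∫ x in Set.Ici 1, f (r * x) := by
    rw [integral_Ici_eq_integral_Ioi, integral_comp_mul_left_Ioi f 1 hr, mul_one, smul_eq_mul,
      mul_inv_cancel_left₀ hr.ne']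
  rw [hscale, mul_pow, volume_pi, Measure.restrict_pi_pi,
    integral_fintype_prod_eq_pow fun x ↦ f (r * x)]

lemma integrableOn_pi_Ici_prod_comp_mul_left (hf : IntegrableOn f (Set.Ioi r))
    (hr : 0 < r) :
    IntegrableOn (fun x : ι → ℝ ↦ ∏ i, f (r * x i)) (Set.univ.pi fun _ ↦ Set.Ici 1) := by
  have hf_comp : IntegrableOn (fun x ↦ f (r * x)) (Set.Ici 1) := by
    rwa [integrableOn_Ici_iff_integrableOn_Ioi, integrableOn_Ioi_comp_mul_left_iff f 1 hr, mul_one]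
  rw [IntegrableOn, volume_pi, Measure.restrict_pi_pi]
  exact Integrable.fintype_prod fun _ ↦ hf_comp

lemma prod_exp_neg_mul_rpow {x : ι → ℝ} (hr : 0 ≤ r) (hx : ∀ i, 0 ≤ x i) :
    ∏ i, exp (-(r * x i) ^ p) = exp (-(∑ i, x i ^ p) * r ^ p) := by
  simp_rw [← exp_sum, mul_rpow hr (hx _), sum_neg_distrib, ← mul_sum, neg_mul, mul_comm]

end Scaling

section Tail

variable {p q r : ℝ}

lemma integrableOn_exp_neg_mul_rpow {b : ℝ} (hp : 0 < p) (hb : 0 < b) :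
    IntegrableOn (fun x ↦ exp (-b * x ^ p)) (Set.Ioi 0) := by
  simpa only [rpow_zero, one_mul] using
    integrableOn_rpow_mul_exp_neg_mul_rpow neg_one_lt_zero hp hb

lemma integrableOn_exp_neg_rpow (hp : 0 < p) (hr : 0 ≤ r) :
    IntegrableOn (fun x ↦ exp (-x ^ p)) (Set.Ioi r) := by
  simpa only [neg_one_mul] using
    (integrableOn_exp_neg_mul_rpow hp one_pos).mono_set (Set.Ioi_subset_Ioi hr)

lemma antitoneOn_integral_Ioi_exp_neg_rpow (hp : 0 < p) :
    AntitoneOn (fun r ↦ ∫ η in Set.Ioi r, exp (-η ^ p)) (Set.Ici 0) := fun _ ha _ _ hab ↦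
  setIntegral_mono_set (integrableOn_exp_neg_rpow hp ha)
    (ae_of_all _ fun _ ↦ (exp_pos _).le) (Set.Ioi_subset_Ioi hab).eventuallyLE

lemma integral_Ioi_exp_neg_rpow_le (hp : 0 < p) (hr : 0 ≤ r) :
    ∫ η in Set.Ioi r, exp (-η ^ p) ≤
      exp (-(1 / 2) * r ^ p) * ∫ η in Set.Ioi 0, exp (-(1 / 2) * η ^ p) := by
  have hint := integrableOn_exp_neg_mul_rpow hp one_half_pos
  have hsub : Set.Ioi r ⊆ Set.Ioi 0 := Set.Ioi_subset_Ioi hr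
  have hsplit : ∀ η ∈ Set.Ioi r,
      exp (-η ^ p) ≤ exp (-(1 / 2) * r ^ p) * exp (-(1 / 2) * η ^ p) := fun η hη ↦ by
    have : r ^ p ≤ η ^ p := rpow_le_rpow hr (le_of_lt hη) hp.le
    rw [← exp_add, exp_le_exp]
    linarith
  calc ∫ η in Set.Ioi r, exp (-η ^ p)
      ≤ ∫ η in Set.Ioi r, exp (-(1 / 2) * r ^ p) * exp (-(1 / 2) * η ^ p) :=
        setIntegral_mono_on (integrableOn_exp_neg_rpow hp hr) ((hint.mono_set hsub).const_mul _)
          measurableSet_Ioi hsplit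
    _ = exp (-(1 / 2) * r ^ p) * ∫ η in Set.Ioi r, exp (-(1 / 2) * η ^ p) :=
        integral_const_mul _ _
    _ ≤ exp (-(1 / 2) * r ^ p) * ∫ η in Set.Ioi 0, exp (-(1 / 2) * η ^ p) := by
        gcongr
        exact ae_of_all _ fun _ ↦ (exp_pos _).le

lemma integrableOn_rpow_mul_integral_Ioi_exp_neg_rpow_pow {n : ℕ} (hp : 0 < p) (hq : -1 < q)
    (hn : 0 < n) :
    IntegrableOn (fun r ↦ r ^ q * (∫ η in Set.Ioi r, exp (-η ^ p)) ^ n) (Set.Ioi 0) := by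
  set C := ∫ η in Set.Ioi 0, exp (-(1 / 2) * η ^ p)
  have hdom : IntegrableOn (fun r ↦ C ^ n * (r ^ q * exp (-(n / 2) * r ^ p))) (Set.Ioi 0) :=
    (integrableOn_rpow_mul_exp_neg_mul_rpow hq hp (by positivity)).const_mul _
  have hmeas : AEMeasurable (fun r ↦ ∫ η in Set.Ioi r, exp (-η ^ p))
      (volume.restrict (Set.Ioi 0)) :=
    aemeasurable_restrict_of_antitoneOn measurableSet_Ioi
      ((antitoneOn_integral_Ioi_exp_neg_rpow hp).mono Set.Ioi_subset_Ici_self)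
  refine Integrable.mono' hdom
    ((measurable_id.pow_const q).aemeasurable.mul (hmeas.pow_const n)).aestronglyMeasurable ?_
  filter_upwards [ae_restrict_mem measurableSet_Ioi] with r (hr : 0 < r)
  rw [norm_of_nonneg (by positivity)]
  calc r ^ q * (∫ η in Set.Ioi r, exp (-η ^ p)) ^ n
      ≤ r ^ q * (exp (-(1 / 2) * r ^ p) * C) ^ n := by
        gcongr
        exact integral_Ioi_exp_neg_rpow_le hp hr.le
    _ = C ^ n * (r ^ q * exp (-(n / 2) * r ^ p)) := by
        rw [mul_pow, ← exp_nat_mul]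
        ring_nf

end Tail

section Kernel

variable {ι : Type*} [Fintype ι] {p q r : ℝ}

lemma integral_pi_Ici_rpow_mul_exp_neg_sum_rpow (hr : 0 < r) :
    ∫ x in Set.univ.pi fun _ : ι ↦ Set.Ici 1,
        r ^ (q + Fintype.card ι) * exp (-(∑ i, x i ^ p) * r ^ p) =
      r ^ q * (∫ η in Set.Ioi r, exp (-η ^ p)) ^ Fintype.card ι := by
  rw [setIntegral_Ioi_pow_card hr, integral_const_mul, rpow_add_natCast hr.ne', mul_assoc]
  congr 2
  exact setIntegral_congr_fun (.univ_pi fun _ ↦ measurableSet_Ici) fun x hx ↦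
    (prod_exp_neg_mul_rpow hr.le fun i ↦ zero_le_one.trans (hx i trivial)).symm

lemma integrableOn_pi_Ici_exp_neg_sum_rpow (hp : 0 < p) (hr : 0 < r) :
    IntegrableOn (fun x : ι → ℝ ↦ exp (-(∑ i, x i ^ p) * r ^ p))
      (Set.univ.pi fun _ ↦ Set.Ici 1) :=
  (integrableOn_pi_Ici_prod_comp_mul_left (integrableOn_exp_neg_rpow hp hr.le) hr).congr_fun
    (fun _ hx ↦ prod_exp_neg_mul_rpow hr.le fun i ↦ zero_le_one.trans (hx i trivial))
    (.univ_pi fun _ ↦ measurableSet_Ici)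

lemma integrable_uncurry_rpow_mul_exp_neg_sum_rpow [Nonempty ι] (hp : 0 < p) (hq : -1 < q) :
    Integrable (Function.uncurry fun (r : ℝ) (x : ι → ℝ) ↦
        r ^ (q + Fintype.card ι) * exp (-(∑ i, x i ^ p) * r ^ p))
      ((volume.restrict (Set.Ioi 0)).prod
        (volume.restrict (Set.univ.pi fun _ ↦ Set.Ici 1))) := by
  have hpos : ∀ᵐ r : ℝ ∂volume.restrict (Set.Ioi 0), 0 < r := ae_restrict_mem measurableSet_Ioi
  refine integrable_uncurry_of_nonneg ?_ ?_ ?_ ?_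
  · exact Measurable.aestronglyMeasurable (by unfold Function.uncurry; fun_prop)
  · filter_upwards [hpos] with r hr
    exact ae_of_all _ fun x ↦ by positivity
  · filter_upwards [hpos] with r hr
    exact (integrableOn_pi_Ici_exp_neg_sum_rpow hp hr).const_mul _
  · refine (integrableOn_rpow_mul_integral_Ioi_exp_neg_rpow_pow hp hq
      (Fintype.card_pos (α := ι))).congr ?_
    filter_upwards [hpos] with r hr
    exact (integral_pi_Ici_rpow_mul_exp_neg_sum_rpow hr).symm

end Kernel

theorem integral_r_mul_gaussian_tail_pow_general {ι : Type*} [Fintype ι] [Nonempty ι] {p q : ℝ}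
    (hp : 0 < p) (hq : -1 < q) :
    (∫ r in Set.Ioi (0 : ℝ), r ^ q * (∫ η in Set.Ioi r, exp (-η ^ p)) ^ Fintype.card ι) =
        1 / p * Gamma ((q + Fintype.card ι + 1) / p) *
          ∫ x in Set.univ.pi fun _ : ι ↦ Set.Ici (1 : ℝ),
            (∑ i, x i ^ p) ^ (-(q + Fintype.card ι + 1) / p) ∧
    IntegrableOn (fun r ↦ r ^ q * (∫ η in Set.Ioi r, exp (-η ^ p)) ^ Fintype.card ι)
      (Set.Ioi 0) ∧
    IntegrableOn (fun x : ι → ℝ ↦ (∑ i, x i ^ p) ^ (-(q + Fintype.card ι + 1) / p))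
      (Set.univ.pi fun _ ↦ Set.Ici 1) := by
  have hkernel := integrable_uncurry_rpow_mul_exp_neg_sum_rpow (ι := ι) hp hq
  have hexponent : -1 < q + Fintype.card ι := by linarith [(Fintype.card ι).cast_nonneg (α := ℝ)]
  have hGamma_pos : 0 < 1 / p * Gamma ((q + Fintype.card ι + 1) / p) :=
    mul_pos (by positivity) (Gamma_pos_of_pos (div_pos (by linarith) hp))
  have hradial : ∀ᵐ x : ι → ℝ ∂volume.restrict (Set.univ.pi fun _ ↦ Set.Ici 1),
      ∫ r in Set.Ioi 0, r ^ (q + Fintype.card ι) * exp (-(∑ i, x i ^ p) * r ^ p) =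
        1 / p * Gamma ((q + Fintype.card ι + 1) / p) *
          (∑ i, x i ^ p) ^ (-(q + Fintype.card ι + 1) / p) := by
    filter_upwards [ae_restrict_mem (.univ_pi fun _ ↦ measurableSet_Ici)] with x hx
    have hsum : 0 < ∑ i, x i ^ p :=
      sum_pos (fun i _ ↦ rpow_pos_of_pos (one_pos.trans_le (hx i trivial)) p) univ_nonempty
    rw [integral_rpow_mul_exp_neg_mul_rpow hp hexponent hsum]
    ring
  refine ⟨?_, integrableOn_rpow_mul_integral_Ioi_exp_neg_rpow_pow hp hq Fintype.card_pos, ?_⟩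
  · rw [← integral_const_mul, ← integral_congr_ae hradial, ← integral_integral_swap hkernel]
    exact setIntegral_congr_fun measurableSet_Ioi fun r hr ↦
      (integral_pi_Ici_rpow_mul_exp_neg_sum_rpow hr).symm
  · rw [IntegrableOn, ← integrable_const_mul_iff hGamma_pos.ne'.isUnit]
    exact hkernel.integral_prod_right.congr hradial

theorem integral_r_mul_gaussian_tail_pow (k : ℕ) (hk : 1 ≤ k) :
    (∫ r in Set.Ioi (0:ℝ), r * (∫ η in Set.Ioi r, Real.exp (-η ^ 2)) ^ k)
        = (1 / 2) * Real.Gamma (((k : ℝ) + 2) / 2) *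
            ∫ η in Set.univ.pi (fun _ : Fin k => Set.Ici (1:ℝ)),
              (∑ i, (η i) ^ 2) ^ (-((k : ℝ) + 2) / 2) ∧
    IntegrableOn (fun r => r * (∫ η in Set.Ioi r, Real.exp (-η ^ 2)) ^ k)
      (Set.Ioi (0:ℝ)) ∧
    IntegrableOn (fun η : Fin k → ℝ => (∑ i, (η i) ^ 2) ^ (-((k : ℝ) + 2) / 2))
      (Set.univ.pi fun _ : Fin k => Set.Ici (1:ℝ)) volume := by
  have : Nonempty (Fin k) := Fin.pos_iff_nonempty.1 hk
  simpa only [rpow_one, rpow_two, Fintype.card_fin, show (1 : ℝ) + k + 1 = k + 2 by ring] using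
    integral_r_mul_gaussian_tail_pow_general (ι := Fin k) two_pos (by norm_num : (-1 : ℝ) < 1)
end
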